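/- For positive real x, let C(x) denote the number of cyclic numbers ≤ x. Then log C(x) / log x tends to 1 as x → ∞. -/

import Mathlib

open Filter Asymptotics Real

/-- A positive integer `n` is *cyclic* if `gcd(n, φ(n)) = 1`. -/
def IsCyclicNum (n : ℕ) : Prop := 0 < n ∧ Nat.gcd n (Nat.totient n) = 1

instance : DecidablePred IsCyclicNum := fun n =>
  decidable_of_iff (0 < n ∧ Nat.gcd n (Nat.totient n) = 1) Iff.rfl

/-- The `n`-th cyclic number, indexed from 1: `cyclicNum 1 = 1`, `cyclicNum 2 = 2`, .... -/
noncomputable def cyclicNum (n : ℕ) : ℕ := Nat.nth IsCyclicNum (n - 1)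

/-- The number of cyclic numbers less than or equal to the real number `x`. -/
noncomputable def cyclicCount (x : ℝ) : ℕ :=
  ((Finset.range (⌊x⌋₊ + 1)).filter IsCyclicNum).card

/-!
Primes are cyclic, so `π(x) ≤ C(x) ≤ x`, and Chebyshev gives `x / log x = O(π(x))`. Bounding a
function up to constant factors bounds its logarithm up to additive constants, which are
negligible against `log x`; since `log (x / log x) = log x - log log x ~ log x`, both bounds on
`log C(x)` are asymptotic to `log x`.
-/

section

variable {α : Type*} {l : Filter α} {f g u v : α → ℝ}

theorem isEquivalent_of_eventuallyLE_of_eventuallyLE (hug : u ~[l] g) (hvg : v ~[l] g)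
    (huf : u ≤ᶠ[l] f) (hfv : f ≤ᶠ[l] v) : f ~[l] g := by
  have hbound : (f - g) =O[l] fun x ↦ |u x - g x| + |v x - g x| := by
    refine IsBigO.of_bound' ?_
    filter_upwards [huf, hfv] with x hux hxv
    rw [Pi.sub_apply, norm_eq_abs, norm_of_nonneg (by positivity), abs_le]
    constructor <;>
      linarith [neg_abs_le (u x - g x), le_abs_self (v x - g x), abs_nonneg (u x - g x),
        abs_nonneg (v x - g x)]
  exact hbound.trans_isLittleO (hug.isLittleO.abs_left.add hvg.isLittleO.abs_left)

theorem exists_eventually_log_le_add_log_of_isBigO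
    (hfg : f =O[l] g) (hf : ∀ᶠ x in l, f x ≠ 0) :
    ∃ C, ∀ᶠ x in l, log (f x) ≤ log (g x) + C := by
  obtain ⟨c, hc, hbound⟩ := hfg.exists_pos
  refine ⟨log c, ?_⟩
  filter_upwards [hbound.bound, hf] with x hx hfx
  have hgx : g x ≠ 0 := fun h ↦ hfx (by simpa [h] using hx)
  calc log (f x) = log |f x| := (log_abs _).symm
    _ ≤ log (c * |g x|) := log_le_log (abs_pos.2 hfx) hx
    _ = log (g x) + log c := by
      rw [log_mul hc.ne' (abs_ne_zero.2 hgx), log_abs, add_comm]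

theorem isEquivalent_log_of_isBigO_of_isBigO
    (huf : u =O[l] f) (hfv : f =O[l] v) (hu : (fun x ↦ log (u x)) ~[l] g)
    (hv : (fun x ↦ log (v x)) ~[l] g) (hg : Tendsto g l atTop) :
    (fun x ↦ log (f x)) ~[l] g := by
  have hu_ne : ∀ᶠ x in l, u x ≠ 0 := by
    filter_upwards [(hu.symm.tendsto_atTop hg).eventually_ne_atTop 0] with x hx hux
    exact hx (by rw [hux, log_zero])
  have hf_ne : ∀ᶠ x in l, f x ≠ 0 := by
    filter_upwards [huf.eq_zero_imp, hu_ne] with x hx hux using mt hx hux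
  obtain ⟨a, ha⟩ := exists_eventually_log_le_add_log_of_isBigO huf hu_ne
  obtain ⟨b, hb⟩ := exists_eventually_log_le_add_log_of_isBigO hfv hf_ne
  have hconst (c : ℝ) : (fun _ ↦ c) =o[l] g :=
    isLittleO_const_left.2 (.inr (tendsto_norm_atTop_atTop.comp hg))
  exact isEquivalent_of_eventuallyLE_of_eventuallyLE (hu.sub_isLittleO (hconst a))
    (hv.add_isLittleO (hconst b)) (ha.mono fun x hx ↦ sub_le_iff_le_add.2 hx) hb

end

theorem isEquivalent_log_div_log : (fun x : ℝ ↦ log (x / log x)) ~[atTop] log := by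
  have hloglog : (fun x : ℝ ↦ log (log x)) =o[atTop] log :=
    isLittleO_log_id_atTop.comp_tendsto tendsto_log_atTop
  refine (IsEquivalent.refl.sub_isLittleO hloglog).congr_left ?_
  filter_upwards [eventually_gt_atTop 1] with x hx
  exact (log_div (by positivity) (log_pos hx).ne').symm

theorem isEquivalent_sub_mul_sub_log_add {c : ℝ} (hc : c ≠ 0) (a b : ℝ) :
    (fun x : ℝ ↦ (x - a) * c - log (x + b)) ~[atTop] fun x ↦ x * c := by
  have hadd : (fun x : ℝ ↦ x + b) ~[atTop] id :=
    IsEquivalent.refl.add_isLittleO (isLittleO_const_id_atTop b)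
  have hsub : (fun x : ℝ ↦ x - a) ~[atTop] id :=
    IsEquivalent.refl.sub_isLittleO (isLittleO_const_id_atTop a)
  have hlog : (fun x : ℝ ↦ log (x + b)) =o[atTop] fun x ↦ x * c := by
    simpa only [id_eq, mul_comm] using
      ((hadd.log tendsto_id).trans_isLittleO isLittleO_log_id_atTop).const_mul_right hc
  exact (hsub.mul IsEquivalent.refl).sub_isLittleO hlog

theorem isBigO_id_psi : (id : ℝ → ℝ) =O[atTop] Chebyshev.psi := by
  have hlog_two : 0 < log 2 := log_pos one_lt_two
  have hequiv := isEquivalent_sub_mul_sub_log_add hlog_two.ne' 1 2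
  have hlower : (fun x : ℝ ↦ (x - 1) * log 2 - log (x + 2)) =O[atTop] Chebyshev.psi := by
    refine IsBigO.of_bound' ?_
    have hpos : ∀ᶠ x : ℝ in atTop, 0 ≤ x * log 2 := by
      filter_upwards [eventually_ge_atTop 0] with x hx using mul_nonneg hx hlog_two.le
    filter_upwards [hequiv.eventually_nonneg hpos, eventually_ge_atTop 0] with x hx hx0
    rw [norm_of_nonneg hx, norm_of_nonneg (Chebyshev.psi_nonneg x)]
    exact Chebyshev.psi_ge' hx0
  have hid : (id : ℝ → ℝ) =O[atTop] fun x ↦ x * log 2 := by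
    simpa only [id_eq, mul_comm] using isBigO_self_const_mul hlog_two.ne' id atTop
  exact (hid.trans hequiv.isBigO_symm).trans hlower

theorem isBigO_div_log_primeCounting_floor :
    (fun x : ℝ ↦ x / log x) =O[atTop] fun x ↦ (Nat.primeCounting ⌊x⌋₊ : ℝ) := by
  have hpsi : (fun x : ℝ ↦ x / log x) =O[atTop] fun x ↦ Chebyshev.psi x / log x := by
    simpa only [id_eq, div_eq_mul_inv] using
      isBigO_id_psi.mul (isBigO_refl (fun x ↦ (log x)⁻¹) atTop)
  refine hpsi.trans (IsBigO.of_bound' ?_)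
  filter_upwards [eventually_gt_atTop 1] with x hx
  have hlog : 0 < log x := log_pos hx
  rw [norm_of_nonneg (div_nonneg (Chebyshev.psi_nonneg x) hlog.le), Real.norm_natCast,
    div_le_iff₀ hlog]
  exact Chebyshev.psi_le_primeCounting_mul_log' x

theorem isCyclicNum_of_prime {p : ℕ} (hp : p.Prime) : IsCyclicNum p := by
  refine ⟨hp.pos, ?_⟩
  rw [Nat.totient_prime hp]
  exact (Nat.coprime_self_sub_right hp.one_le).2 (Nat.coprime_one_right p)

theorem cyclicCount_eq_count (x : ℝ) : cyclicCount x = Nat.count IsCyclicNum (⌊x⌋₊ + 1) :=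
  (Nat.count_eq_card_filter_range _ _).symm

theorem cyclicCount_le_floor (x : ℝ) : cyclicCount x ≤ ⌊x⌋₊ := by
  have hzero : ¬ IsCyclicNum 0 := fun h ↦ h.1.false
  rw [cyclicCount_eq_count, Nat.count_succ', if_neg hzero, add_zero]
  exact Nat.count_le _

theorem primeCounting_floor_le_cyclicCount (x : ℝ) :
    Nat.primeCounting ⌊x⌋₊ ≤ cyclicCount x := by
  rw [cyclicCount_eq_count]
  exact Nat.count_mono_left fun _ _ ↦ isCyclicNum_of_prime

theorem isBigO_cyclicCount_id : (fun x ↦ (cyclicCount x : ℝ)) =O[atTop] (id : ℝ → ℝ) := by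
  refine IsBigO.of_bound' ?_
  filter_upwards [eventually_ge_atTop 0] with x hx
  rw [Real.norm_natCast, id, norm_of_nonneg hx]
  exact (Nat.cast_le.2 (cyclicCount_le_floor x)).trans (Nat.floor_le hx)

theorem isBigO_div_log_cyclicCount :
    (fun x : ℝ ↦ x / log x) =O[atTop] fun x ↦ (cyclicCount x : ℝ) :=
  isBigO_div_log_primeCounting_floor.trans <| .of_norm_le fun x ↦ by
    simpa only [Real.norm_natCast, Nat.cast_le] using primeCounting_floor_le_cyclicCount x

theorem log_cyclicCount_div_log_tendsto_one :
    Tendsto (fun x : ℝ => Real.log (cyclicCount x : ℝ) / Real.log x) atTop (nhds 1) := by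
  have hequiv : (fun x ↦ log (cyclicCount x : ℝ)) ~[atTop] log :=
    isEquivalent_log_of_isBigO_of_isBigO isBigO_div_log_cyclicCount isBigO_cyclicCount_id
      isEquivalent_log_div_log IsEquivalent.refl tendsto_log_atTop
  exact (isEquivalent_iff_tendsto_one (tendsto_log_atTop.eventually_ne_atTop 0)).1 hequiv
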